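/- arXiv:2501.19028 — 2 statements merged into one kernel-verified Lean document; each statement's English description precedes it below -/
import Mathlib

section
/- Consistency of approximating decision rules along epi-convergent subsequences: Under the hypotheses of the infinite-horizon consistency theorem (including 𝒱 compact under the Attouch–Wets distance dl and each B_ν having a fixed point V_ν = B_ν(V_ν) ∈ 𝒱), if V_{ν_κ} is a subsequence of (V_ν) that epi-converges to V, then V = B(V), and for every (x,ξ) ∈ 𝒳 × Ξ the outer limit of the sets argmin_{y∈𝒴(x,ξ)} { φ_{ν_κ}(x,y,ξ) + β V_{ν_κ}(y) } is contained in argmin_{y∈𝒴(x,ξ)} { φ(x,y,ξ) + β V(y) }, and this latter set is nonempty. -/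
/-!
The proof identifies the epi-limit, passes to the limit in the fixed-point equation pointwise, and
reads off the statement on minimizers.

*The limit is in `𝒱`.* By compactness a further subsequence converges in the Attouch–Wets distance
to some `W ∈ 𝒱`. This forces pointwise convergence of the distance functions of the epigraphs, so
`W = V` on `X` (`epi_limit_eq_aw_limit`); values off `X` never matter because `Y x ξ ⊆ X`. Padding
the subsequence with `W` at the missing indices gives a full sequence `F` in `𝒱` that epi-converges
to `W` (`epi_fillIn`), so the equi-semicontinuity and tail conditions apply to `F`, matched with the
measures and costs of the same index.

*Convergence of the Bellman operators.* Epi-convergence and equi-lower semicontinuity give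
`F ν x → W x` (`tendsto_of_equiLsc`). Compactness of `Y x ξ` then gives `b_ν(F ν)(x, ξ) → b(W)(x, ξ)`
(`tendsto_bop`), and equi-lower and equi-upper semicontinuity make the bounds locally uniform in `ξ`
(`lower_of_equiLsc`). A Fatou lemma under weak convergence of the measures (`fatou_weak`), applied to
`b_ν(F ν)(x, ·)` and to its negative, yields `B_ν(F ν)(x) → B(W)(x)`. Along the subsequence the left
side is `V_ν(x)`, which tends to `W x`; hence `W x = B(W)(x)`.

*Minimizers.* The lower epi-bound along a sequence of minimizers (`stage_lower`), combined with the
pointwise convergence of the objective at any competitor, shows that cluster points minimize the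
limit objective. That objective is lower semicontinuous on the compact nonempty set `Y x ξ`, so it
has a minimizer.
-/

open Filter MeasureTheory Topology Set

noncomputable section

/-- Extended-real to extended-nonnegative-real (positive part). -/
def erealToENN (x : EReal) : ENNReal := if x = ⊤ then ⊤ else ENNReal.ofReal x.toReal

/-- Integral of an extended-real-valued function. -/
def eintegral {Ω : Type*} [MeasurableSpace Ω] (P : Measure Ω) (g : Ω → EReal) : EReal :=
  ((∫⁻ ω, erealToENN (g ω) ∂P : ENNReal) : EReal) -
    ((∫⁻ ω, erealToENN (-(g ω)) ∂P : ENNReal) : EReal)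

/-- Integrability of an extended-real-valued function. -/
def EIntegrable {Ω : Type*} [MeasurableSpace Ω] (P : Measure Ω) (g : Ω → EReal) : Prop :=
  AEMeasurable g P ∧ (∫⁻ ω, erealToENN (g ω) ∂P) < ⊤ ∧ (∫⁻ ω, erealToENN (-(g ω)) ∂P) < ⊤

/-- g·1{g ≤ α}. -/
def truncBelow {Ω : Type*} (g : Ω → EReal) (α : ℝ) (ω : Ω) : EReal :=
  if g ω ≤ (α : EReal) then g ω else 0

/-- g·1{g ≥ α}. -/
def truncAbove {Ω : Type*} (g : Ω → EReal) (α : ℝ) (ω : Ω) : EReal :=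
  if (α : EReal) ≤ g ω then g ω else 0

/-- Epi-convergence of a sequence of extended-real-valued functions on a set `Z`. -/
def EpiConvergesOn {E : Type*} [TopologicalSpace E] (Z : Set E)
    (F : ℕ → E → EReal) (f : E → EReal) : Prop :=
  ∀ z ∈ Z,
    (∀ zs : ℕ → E, (∀ ν, zs ν ∈ Z) → Tendsto zs atTop (𝓝 z) →
      f z ≤ liminf (fun ν => F ν (zs ν)) atTop) ∧
    (∃ zs : ℕ → E, (∀ ν, zs ν ∈ Z) ∧ Tendsto zs atTop (𝓝 z) ∧
      limsup (fun ν => F ν (zs ν)) atTop ≤ f z)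

/-- A sequence of functions is equi-lower semicontinuous on `Z`. -/
def EquiLscOn {E : Type*} [PseudoMetricSpace E] (Z : Set E) (F : ℕ → E → EReal) : Prop :=
  ∀ z ∈ Z,
    limsup (fun ν => F ν z) atTop = ⊥ ∨
    ∀ ρ ε : ℝ, 0 < ρ → 0 < ε → ∃ ν' : ℕ, ∃ δ : ℝ, 0 < δ ∧ ∀ ν, ν' ≤ ν →
      min (F ν z - (ε : EReal)) (ρ : EReal) ≤
        ⨅ (w : E) (_ : w ∈ Z) (_ : dist w z ≤ δ), F ν w

/-- Equi-upper semicontinuity on `Z`. -/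
def EquiUscOn {E : Type*} [PseudoMetricSpace E] (Z : Set E) (F : ℕ → E → EReal) : Prop :=
  EquiLscOn Z (fun ν z => -(F ν z))

/-- Iterated lower limit as `(ν, x) → (∞, x̄)` with `x` ranging over `X`. -/
def liminfNuX {E : Type*} [PseudoMetricSpace E] (X : Set E) (xb : E)
    (h : ℕ → E → EReal) : EReal :=
  ⨆ (δ : ℝ) (_ : 0 < δ) (ν' : ℕ),
    ⨅ (ν : ℕ) (_ : ν' ≤ ν) (x : E) (_ : x ∈ X) (_ : dist x xb ≤ δ), h ν x

/-- Upper limit as `ν → ∞`. -/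
def limsupNu (h : ℕ → EReal) : EReal := ⨅ (ν' : ℕ), ⨆ (ν : ℕ) (_ : ν' ≤ ν), h ν

/-- Lower limit as `α → −∞`. -/
def liminfAlphaBot (G : ℝ → EReal) : EReal := ⨆ (αb : ℝ), ⨅ (α : ℝ) (_ : α ≤ αb), G α

/-- Upper limit as `α → ∞`. -/
def limsupAlphaTop (G : ℝ → EReal) : EReal := ⨅ (αb : ℝ), ⨆ (α : ℝ) (_ : αb ≤ α), G α

/-- Weak convergence of measures: integrals of bounded continuous functions converge. -/
def WeakConv {Ω : Type*} [TopologicalSpace Ω] [MeasurableSpace Ω]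
    (Pν : ℕ → Measure Ω) (P : Measure Ω) : Prop :=
  ∀ h : Ω → ℝ, Continuous h → (∃ C : ℝ, ∀ ω, |h ω| ≤ C) →
    Tendsto (fun ν => ∫ ω, h ω ∂(Pν ν)) atTop (𝓝 (∫ ω, h ω ∂P))

/-- The outer limit of a sequence of sets in a topological space. -/
def OuterLimit {X : Type*} [TopologicalSpace X] (S : ℕ → Set X) : Set X :=
  {x | ∃ φ : ℕ → ℕ, StrictMono φ ∧ ∃ s : ℕ → X, (∀ κ, s κ ∈ S (φ κ)) ∧
    Tendsto s atTop (𝓝 x)}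

/-- The set of minimizers of `g` over `S`. -/
def ArgminOn {E : Type*} (S : Set E) (g : E → EReal) : Set E :=
  {y ∈ S | ∀ z ∈ S, g y ≤ g z}

/-- `b(f)(x,ξ) = inf_{y ∈ 𝒴(x,ξ)} { φ(x,y,ξ) + β f(y) }`. -/
def bop {E Ξ' : Type*} (Y : E → Ξ' → Set E) (β : ℝ) (φ : E → E → Ξ' → ℝ)
    (f : E → EReal) (x : E) (ξ : Ξ') : EReal :=
  ⨅ (y : E) (_ : y ∈ Y x ξ), (((φ x y ξ : ℝ) : EReal) + (β : EReal) * f y)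

/-- The epigraph of `f`, viewed within `X × ℝ`. -/
def epiSet {E : Type*} (X : Set E) (f : E → EReal) : Set (E × ℝ) :=
  {p | p.1 ∈ X ∧ f p.1 ≤ ((p.2 : ℝ) : EReal)}

/-- The Attouch–Wets distance between `f` and `g` (epigraphs taken within `X × ℝ`,
with centre `zc`). -/
def awDist {E : Type*} [PseudoMetricSpace E] (X : Set E) (zc : E × ℝ)
    (f g : E → EReal) : ℝ :=
  ∫ ρ in Set.Ioi (0 : ℝ),
    (sSup ((fun z => |Metric.infDist z (epiSet X f) - Metric.infDist z (epiSet X g)|) ''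
      (Metric.closedBall zc ρ))) * Real.exp (-ρ)

/-- `f` is a lower semicontinuous function on `X`, not identically `∞`. -/
def LscFcnOn {E : Type*} [TopologicalSpace E] (X : Set E) (f : E → EReal) : Prop :=
  LowerSemicontinuousOn f X ∧ ∃ x ∈ X, f x ≠ ⊤

/-- `𝒱` is (sequentially) closed with respect to the Attouch–Wets distance. -/
def DlSeqClosed {E : Type*} [PseudoMetricSpace E] (X : Set E) (zc : E × ℝ)
    (𝒱 : Set (E → EReal)) : Prop :=
  ∀ Vs : ℕ → (E → EReal), (∀ ν, Vs ν ∈ 𝒱) → ∀ W, LscFcnOn X W →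
    Tendsto (fun ν => awDist X zc (Vs ν) W) atTop (𝓝 0) → W ∈ 𝒱

/-- `𝒱` is (sequentially) compact with respect to the Attouch–Wets distance. -/
def DlSeqCompact {E : Type*} [PseudoMetricSpace E] (X : Set E) (zc : E × ℝ)
    (𝒱 : Set (E → EReal)) : Prop :=
  ∀ Vs : ℕ → (E → EReal), (∀ ν, Vs ν ∈ 𝒱) → ∃ W ∈ 𝒱, ∃ φ : ℕ → ℕ,
    StrictMono φ ∧ Tendsto (fun κ => awDist X zc (Vs (φ κ)) W) atTop (𝓝 0)

/-- The outer limit, with respect to epi-convergence on `X`, of a sequence of sets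
of functions. -/
def EpiOuterLimit {E : Type*} [TopologicalSpace E] (X : Set E)
    (S : ℕ → Set (E → EReal)) : Set (E → EReal) :=
  {W | ∃ φ : ℕ → ℕ, StrictMono φ ∧ ∃ s : ℕ → (E → EReal),
    (∀ κ, s κ ∈ S (φ κ)) ∧ EpiConvergesOn X s W}

/-! ### Epi-convergence and equi-lower semicontinuity -/

/-- Filter form of the lower half of epi-convergence. A violation would occur along some
`ν_k → ∞`, `w_k → z`; filling the missing indices with `z` turns it into a full sequence. -/
lemma lower_of_epi {E : Type*} [PseudoMetricSpace E] {Z : Set E} {F : ℕ → E → EReal}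
    {f : E → EReal} (h : EpiConvergesOn Z F f) {z : E} (hz : z ∈ Z) {a : EReal} (ha : a < f z) :
    ∀ᶠ p in atTop ×ˢ 𝓝[Z] z, a < F p.1 p.2 := by
  by_contra hcon
  obtain ⟨ns, hns, hle⟩ := exists_seq_forall_of_frequently
    ((not_eventually.1 hcon).and_eventually
      ((tendsto_snd (f := atTop (α := ℕ)) (g := 𝓝[Z] z)).eventually self_mem_nhdsWithin))
  obtain ⟨k, hk, hk'⟩ := strictMono_subseq_of_tendsto_atTop (tendsto_fst.comp hns)
  have hinj : Function.Injective (fun j => (ns (k j)).1) := hk'.injective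
  have hw : Tendsto (fun j => (ns (k j)).2) atTop (𝓝 z) :=
    ((tendsto_snd.comp hns).comp hk.tendsto_atTop).mono_right nhdsWithin_le_nhds
  set zs : ℕ → E := Function.extend (fun j => (ns (k j)).1) (fun j => (ns (k j)).2) (fun _ => z)
    with hzs
  have e1 : ∀ j, zs ((ns (k j)).1) = (ns (k j)).2 := fun j => hinj.extend_apply _ _ j
  have e2 : ∀ ν, (¬ ∃ j, (ns (k j)).1 = ν) → zs ν = z := fun ν hν =>
    Function.extend_apply' _ _ _ hν
  have hmem : ∀ ν, zs ν ∈ Z := by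
    intro ν
    by_cases hν : ∃ j, (ns (k j)).1 = ν
    · obtain ⟨j, rfl⟩ := hν
      rw [e1]; exact (hle _).2
    · rw [e2 ν hν]; exact hz
  have hlim : Tendsto zs atTop (𝓝 z) := by
    intro U hU
    obtain ⟨K, hK⟩ := eventually_atTop.1 (hw hU)
    refine eventually_atTop.2 ⟨(ns (k K)).1, fun ν hν => ?_⟩
    by_cases hν' : ∃ j, (ns (k j)).1 = ν
    · obtain ⟨j, rfl⟩ := hν'
      rw [e1]; exact hK j (hk'.le_iff_le.1 hν)
    · rw [e2 ν hν']; exact mem_of_mem_nhds hU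
  have hlow := (h z hz).1 zs hmem hlim
  have hfr : ∃ᶠ ν in atTop, F ν (zs ν) ≤ a := by
    refine frequently_atTop.2 fun N => ⟨(ns (k N)).1, hk'.id_le N, ?_⟩
    rw [e1]; exact not_lt.1 (hle _).1
  exact absurd (hlow.trans (liminf_le_of_frequently_le hfr)) (not_le.2 ha)

/-- An epi-convergent equi-lsc sequence converges pointwise. -/
lemma tendsto_of_equiLsc {E : Type*} [PseudoMetricSpace E] {Z : Set E} {F : ℕ → E → EReal}
    {f : E → EReal} (h : EpiConvergesOn Z F f) (he : EquiLscOn Z F) {z : E} (hz : z ∈ Z) :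
    Tendsto (fun ν => F ν z) atTop (𝓝 (f z)) := by
  have hl : f z ≤ liminf (fun ν => F ν z) atTop :=
    (h z hz).1 (fun _ => z) (fun _ => hz) tendsto_const_nhds
  refine tendsto_of_le_liminf_of_limsup_le hl ?_
  rcases he z hz with hb | hb
  · rw [hb]; exact bot_le
  obtain ⟨zs, hzs, hlim, hsup⟩ := (h z hz).2
  refine le_of_forall_gt fun b hb' => ?_
  obtain ⟨r2, h2, h2b⟩ := EReal.lt_iff_exists_real_btwn.1 hb'
  obtain ⟨r1, h1, h12⟩ := EReal.lt_iff_exists_real_btwn.1 h2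
  have h12' : r1 < r2 := EReal.coe_lt_coe_iff.1 h12
  obtain ⟨ν', δ, hδ, hmin⟩ := hb (max r1 1) (r2 - r1) (lt_max_of_lt_right one_pos) (sub_pos.2 h12')
  have hev := eventually_lt_of_limsup_lt (hsup.trans_lt h1)
  refine (limsup_le_of_le (h := ?_)).trans_lt h2b
  filter_upwards [hev, eventually_ge_atTop ν', hlim.eventually (Metric.closedBall_mem_nhds z hδ)]
    with ν hν hνν hd
  have h3 := (hmin ν hνν).trans (iInf₂_le_of_le (zs ν) (hzs ν) (iInf_le _ hd))
  have h4 : F ν z - ((r2 - r1 : ℝ) : EReal) < r1 := by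
    rcases min_le_iff.1 h3 with h5 | h5
    · exact h5.trans_lt hν
    · exact absurd (h5.trans_lt hν) (not_lt.2 (EReal.coe_le_coe_iff.2 (le_max_left _ _)))
  have h6 := (EReal.sub_lt_iff (Or.inl (EReal.coe_ne_bot _)) (Or.inl (EReal.coe_ne_top _))).1 h4
  rw [← EReal.coe_add] at h6
  exact h6.le.trans (by rw [add_sub_cancel])

/-- Equi-lower semicontinuity upgrades convergence at the point `z` to a lower bound that is locally
uniform around `z`. -/
lemma lower_of_equiLsc {E : Type*} [PseudoMetricSpace E] {Z : Set E} {F : ℕ → E → EReal}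
    {c : EReal} (he : EquiLscOn Z F) {z : E} (hz : z ∈ Z)
    (h : Tendsto (fun ν => F ν z) atTop (𝓝 c)) {a : EReal} (ha : a < c) :
    ∀ᶠ p in atTop ×ˢ 𝓝[Z] z, a < F p.1 p.2 := by
  rcases he z hz with hb | hb
  · rw [h.limsup_eq] at hb
    rw [hb] at ha
    exact absurd ha not_lt_bot
  obtain ⟨r2, h2, h2b⟩ := EReal.lt_iff_exists_real_btwn.1 ha
  obtain ⟨r1, h1, h12⟩ := EReal.lt_iff_exists_real_btwn.1 h2
  have h12' : r1 < r2 := EReal.coe_lt_coe_iff.1 h12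
  obtain ⟨ν', δ, hδ, hmin⟩ := hb (max r1 1) (r2 - r1) (lt_max_of_lt_right one_pos) (sub_pos.2 h12')
  have hev := (h.eventually (lt_mem_nhds h2b)).and (eventually_ge_atTop ν')
  have hd : ∀ᶠ w in 𝓝[Z] z, w ∈ Z ∧ dist w z ≤ δ :=
    eventually_mem_nhdsWithin.and
      (nhdsWithin_le_nhds (Metric.closedBall_mem_nhds z hδ))
  filter_upwards [hev.prod_mk hd] with p hp
  obtain ⟨⟨hp1, hp2⟩, hp3, hp4⟩ := hp
  have h3 := (hmin p.1 hp2).trans (iInf₂_le_of_le p.2 hp3 (iInf_le _ hp4))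
  refine h1.trans_le (le_trans (le_min ?_ (EReal.coe_le_coe_iff.2 (le_max_left _ _))) h3)
  rw [EReal.le_sub_iff_add_le (Or.inl (EReal.coe_ne_bot _)) (Or.inl (EReal.coe_ne_top _)),
    ← EReal.coe_add, add_sub_cancel]
  exact hp1.le

/-! ### The stage objective `φ + β V` -/

lemma tendsto_stage {ι : Type*} {l : Filter ι} {β : ℝ} {u : ι → ℝ} {v : ι → EReal}
    {s : ℝ} {c : EReal} (hu : Tendsto u l (𝓝 s)) (hv : Tendsto v l (𝓝 c)) :
    Tendsto (fun i => (u i : EReal) + (β : EReal) * v i) l (𝓝 ((s : EReal) + β * c)) := by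
  have h1 : Tendsto (fun i => (u i : EReal)) l (𝓝 (s : EReal)) :=
    (continuous_coe_real_ereal.tendsto s).comp hu
  have h2 : Tendsto (fun i => (β : EReal) * v i) l (𝓝 (β * c)) :=
    EReal.Tendsto.const_mul hv (Or.inl (EReal.coe_ne_bot _)) (Or.inl (EReal.coe_ne_top _))
  exact (EReal.continuousAt_add (p := ((s : EReal), β * c)) (Or.inl (EReal.coe_ne_top _))
    (Or.inl (EReal.coe_ne_bot _))).tendsto.comp (h1.prodMk_nhds h2)

/-- Lower bounds add up: since `s` is real, no `⊤ + ⊥` occurs in `s + β c`. -/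
lemma eventually_stage {ι : Type*} {l : Filter ι} {β : ℝ} (hβ : 0 < β) {u : ι → ℝ} {v : ι → EReal}
    {s : ℝ} {c : EReal} (hu : ∀ a : EReal, a < s → ∀ᶠ i in l, a < u i)
    (hv : ∀ a < c, ∀ᶠ i in l, a < v i)
    {a : EReal} (ha : a < (s : EReal) + β * c) :
    ∀ᶠ i in l, a < (u i : EReal) + (β : EReal) * v i := by
  have hc : c ≠ ⊥ := by
    rintro rfl
    rw [EReal.coe_mul_bot_of_pos hβ, EReal.add_bot] at ha
    exact not_lt_bot ha
  have hβ' : (0 : EReal) ≤ β := by exact_mod_cast hβ.le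
  have hne : (𝓝[<] c).NeBot := nhdsLT_neBot_of_exists_lt ⟨⊥, bot_lt_iff_ne_bot.2 hc⟩
  -- by continuity the bound already holds at some `s' < s`, `c' < c`
  have hev : ∀ᶠ p in 𝓝[<] s ×ˢ 𝓝[<] c, a < (p.1 : EReal) + (β : EReal) * p.2 :=
    (tendsto_stage (tendsto_fst.mono_right nhdsWithin_le_nhds)
      (tendsto_snd.mono_right nhdsWithin_le_nhds)).eventually (lt_mem_nhds ha)
  obtain ⟨⟨s', c'⟩, hlt, hs', hc'⟩ :=
    (hev.and (prod_mem_prod self_mem_nhdsWithin self_mem_nhdsWithin)).exists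
  filter_upwards [hu s' (by exact_mod_cast hs'), hv c' hc'] with i h1 h2
  exact hlt.trans_le (add_le_add h1.le (mul_le_mul_of_nonneg_left h2.le hβ'))

/-- Locally uniform eventual properties are uniform on compact sets. -/
lemma eventually_forall_compact {E ι : Type*} [TopologicalSpace E] {K : Set E} (hK : IsCompact K)
    {l : Filter ι} {p : ι → E → Prop}
    (h : ∀ y ∈ K, ∀ᶠ q in l ×ˢ 𝓝[K] y, p q.1 q.2) : ∀ᶠ i in l, ∀ y ∈ K, p i y := by
  refine hK.induction_on (p := fun S => ∀ᶠ i in l, ∀ y ∈ S, p i y) (by simp)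
    (fun S T hST hT => hT.mono fun i hi y hy => hi y (hST hy))
    (fun S T hS hT => by
      filter_upwards [hS, hT] with i h1 h2 y hy
      exact hy.elim (h1 y) (h2 y)) ?_
  intro y hy
  obtain ⟨pa, ha, pb, hb, hab⟩ := eventually_prod_iff.1 (h y hy)
  exact ⟨{w | pb w}, hb, ha.mono fun i hi w hw => hab hi hw⟩

/-! ### Extended-real integrals -/

/-- An integrable extended-real function is a.e. finite, and its integral is the Bochner integral of
its real part. -/
lemma toReal_integral_of_eIntegrable {Ω : Type*} [MeasurableSpace Ω] {P : Measure Ω}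
    {g : Ω → EReal} (hg : EIntegrable P g) :
    Integrable (fun ω => (g ω).toReal) P ∧ (∀ᵐ ω ∂P, ((g ω).toReal : EReal) = g ω) ∧
      eintegral P g = ((∫ ω, (g ω).toReal ∂P : ℝ) : EReal) := by
  obtain ⟨hm, hp, hn⟩ := hg
  have hmn : AEMeasurable (fun ω => -g ω) P := continuous_neg.measurable.comp_aemeasurable hm
  have hmp : AEMeasurable (fun ω => erealToENN (g ω)) P :=
    EReal.continuous_toENNReal.measurable.comp_aemeasurable hm
  have hmn' : AEMeasurable (fun ω => erealToENN (-g ω)) P :=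
    EReal.continuous_toENNReal.measurable.comp_aemeasurable hmn
  have hfin : ∀ᵐ ω ∂P, g ω ≠ ⊤ ∧ g ω ≠ ⊥ := by
    filter_upwards [ae_lt_top' hmp hp.ne, ae_lt_top' hmn' hn.ne] with ω h1 h2
    refine ⟨fun h => ?_, fun h => ?_⟩
    · simp [erealToENN, h] at h1
    · simp [erealToENN, h] at h2
  have ep : ∫⁻ ω, erealToENN (g ω) ∂P = ∫⁻ ω, ENNReal.ofReal (g ω).toReal ∂P := by
    refine lintegral_congr_ae ?_
    filter_upwards [hfin] with ω h
    simp [erealToENN, h.1]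
  have en : ∫⁻ ω, erealToENN (-g ω) ∂P = ∫⁻ ω, ENNReal.ofReal (-(g ω).toReal) ∂P := by
    refine lintegral_congr_ae ?_
    filter_upwards [hfin] with ω h
    simp [erealToENN, h.2]
  have hmr : AEMeasurable (fun ω => (g ω).toReal) P := hm.ereal_toReal
  have hint : Integrable (fun ω => (g ω).toReal) P := by
    refine ⟨hmr.aestronglyMeasurable, ?_⟩
    have hle : ∫⁻ ω, ‖(g ω).toReal‖ₑ ∂P ≤ ∫⁻ ω, (ENNReal.ofReal (g ω).toReal
        + ENNReal.ofReal (-(g ω).toReal)) ∂P := by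
      refine lintegral_mono fun ω => ?_
      rw [Real.enorm_eq_ofReal_abs]
      rcases le_total 0 (g ω).toReal with h | h
      · rw [abs_of_nonneg h]; exact le_self_add
      · rw [abs_of_nonpos h]; exact le_add_self
    refine hle.trans_lt ?_
    rw [lintegral_add_left' hmr.ennreal_ofReal, ← ep, ← en]
    exact ENNReal.add_lt_top.2 ⟨hp, hn⟩
  refine ⟨hint, hfin.mono fun ω h => EReal.coe_toReal h.1 h.2, ?_⟩
  rw [integral_eq_lintegral_pos_part_sub_lintegral_neg_part hint, eintegral, ep, en,
    EReal.coe_sub]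
  rw [ep] at hp
  rw [en] at hn
  rw [EReal.coe_ennreal_toReal hp.ne, EReal.coe_ennreal_toReal hn.ne]

lemma EIntegrable.neg {Ω : Type*} [MeasurableSpace Ω] {P : Measure Ω}
    {g : Ω → EReal} (hg : EIntegrable P g) : EIntegrable P (fun ω => -g ω) :=
  ⟨continuous_neg.measurable.comp_aemeasurable hg.1, hg.2.2, by simpa using hg.2.1⟩

lemma eintegral_neg {Ω : Type*} [MeasurableSpace Ω] {P : Measure Ω}
    {g : Ω → EReal} (hg : EIntegrable P g) :
    eintegral P (fun ω => -g ω) = -eintegral P g := by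
  rw [(toReal_integral_of_eIntegrable hg.neg).2.2, (toReal_integral_of_eIntegrable hg).2.2,
    ← EReal.coe_neg, ← integral_neg]
  simp

lemma EIntegrable.truncBelow {Ω : Type*} [MeasurableSpace Ω] {P : Measure Ω}
    {g : Ω → EReal} (hg : EIntegrable P g) (α : ℝ) : EIntegrable P (truncBelow g α) := by
  have hm : Measurable (fun t : EReal => if t ≤ (α : EReal) then t else 0) :=
    Measurable.ite measurableSet_Iic measurable_id measurable_const
  refine ⟨hm.comp_aemeasurable hg.1, (lintegral_mono fun ω => ?_).trans_lt hg.2.1,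
    (lintegral_mono fun ω => ?_).trans_lt hg.2.2⟩
  · unfold _root_.truncBelow
    split_ifs
    · exact le_rfl
    · simp [erealToENN]
  · unfold _root_.truncBelow
    split_ifs
    · exact le_rfl
    · simp [erealToENN]

lemma EIntegrable.truncAbove {Ω : Type*} [MeasurableSpace Ω] {P : Measure Ω}
    {g : Ω → EReal} (hg : EIntegrable P g) (α : ℝ) : EIntegrable P (truncAbove g α) := by
  have hm : Measurable (fun t : EReal => if (α : EReal) ≤ t then t else 0) :=
    Measurable.ite measurableSet_Ici measurable_id measurable_const
  refine ⟨hm.comp_aemeasurable hg.1, (lintegral_mono fun ω => ?_).trans_lt hg.2.1,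
    (lintegral_mono fun ω => ?_).trans_lt hg.2.2⟩
  · unfold _root_.truncAbove
    split_ifs
    · exact le_rfl
    · simp [erealToENN]
  · unfold _root_.truncAbove
    split_ifs
    · exact le_rfl
    · simp [erealToENN]

lemma truncBelow_neg {Ω : Type*} (g : Ω → EReal) (α : ℝ) :
    truncBelow (fun ω => -g ω) α = fun ω => -truncAbove g (-α) ω := by
  funext ω
  unfold truncBelow truncAbove
  have key : -g ω ≤ (α : EReal) ↔ ((-α : ℝ) : EReal) ≤ g ω := by
    rw [EReal.coe_neg]; exact EReal.neg_le
  by_cases h : -g ω ≤ (α : EReal)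
  · rw [if_pos h, if_pos (key.1 h)]
  · rw [if_neg h, if_neg (fun h' => h (key.2 h')), neg_zero]

/-! ### Fatou's lemma under weak convergence -/

/-- The Pasch–Hausdorff-type envelope `inf_{ν ≥ N, w} h_ν(w) + N d(ξ, w)`, a bounded `N`-Lipschitz
minorant of all `h_ν` with `ν ≥ N`. -/
def lipEnv {Ω : Type*} [PseudoMetricSpace Ω] (h : ℕ → Ω → ℝ) (N : ℕ) (ξ : Ω) : ℝ :=
  ⨅ q : ℕ × Ω, (h (N + q.1) q.2 + N * dist ξ q.2)

lemma bdd_lipEnv {Ω : Type*} [PseudoMetricSpace Ω] {h : ℕ → Ω → ℝ} {M : ℝ}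
    (hM : ∀ ν ξ, |h ν ξ| ≤ M) (N : ℕ) (ξ : Ω) :
    BddBelow (Set.range fun q : ℕ × Ω => h (N + q.1) q.2 + N * dist ξ q.2) := by
  refine ⟨-M, ?_⟩
  rintro _ ⟨q, rfl⟩
  have h1 := (abs_le.1 (hM (N + q.1) q.2)).1
  have h2 : 0 ≤ (N : ℝ) * dist ξ q.2 := by positivity
  simp only
  linarith

lemma lipEnv_le {Ω : Type*} [PseudoMetricSpace Ω] {h : ℕ → Ω → ℝ} {M : ℝ}
    (hM : ∀ ν ξ, |h ν ξ| ≤ M) {N ν : ℕ} (hν : N ≤ ν) (ξ : Ω) : lipEnv h N ξ ≤ h ν ξ := by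
  have := ciInf_le (bdd_lipEnv hM N ξ) (ν - N, ξ)
  simpa [lipEnv, Nat.add_sub_cancel' hν] using this

lemma abs_lipEnv_le {Ω : Type*} [PseudoMetricSpace Ω] {h : ℕ → Ω → ℝ} {M : ℝ}
    (hM : ∀ ν ξ, |h ν ξ| ≤ M) (N : ℕ) (ξ : Ω) : |lipEnv h N ξ| ≤ M := by
  refine abs_le.2 ⟨?_, (lipEnv_le hM le_rfl ξ).trans (abs_le.1 (hM N ξ)).2⟩
  have : Nonempty (ℕ × Ω) := ⟨(0, ξ)⟩
  refine le_ciInf fun q => ?_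
  have h1 := (abs_le.1 (hM (N + q.1) q.2)).1
  have h2 : 0 ≤ (N : ℝ) * dist ξ q.2 := by positivity
  linarith

lemma continuous_lipEnv {Ω : Type*} [PseudoMetricSpace Ω] {h : ℕ → Ω → ℝ} {M : ℝ}
    (hM : ∀ ν ξ, |h ν ξ| ≤ M) (N : ℕ) : Continuous (lipEnv h N) := by
  refine (LipschitzWith.of_le_add_mul (N : NNReal) fun ξ η => ?_).continuous
  have : Nonempty (ℕ × Ω) := ⟨(0, ξ)⟩
  rw [← sub_le_iff_le_add]
  refine le_ciInf fun q => ?_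
  have h1 := ciInf_le (bdd_lipEnv hM N ξ) q
  have h2 := mul_le_mul_of_nonneg_left (dist_triangle ξ η q.2) (Nat.cast_nonneg (α := ℝ) N)
  rw [sub_le_iff_le_add]
  simp only [NNReal.coe_natCast]
  unfold lipEnv
  linarith

/-- The envelopes recover the limit function pointwise: near `ξ` the locally uniform lower bound
applies, and away from `ξ` the penalty `N d(ξ, w)` beats the uniform bound `M`. -/
lemma tendsto_lipEnv {Ω : Type*} [PseudoMetricSpace Ω] {h : ℕ → Ω → ℝ} {h0 : Ω → ℝ} {M : ℝ}
    (hM : ∀ ν ξ, |h ν ξ| ≤ M) (ξ : Ω)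
    (hlow : ∀ a < h0 ξ, ∀ᶠ p in atTop ×ˢ 𝓝 ξ, a < h p.1 p.2)
    (hpt : Tendsto (fun ν => h ν ξ) atTop (𝓝 (h0 ξ))) :
    Tendsto (fun N => lipEnv h N ξ) atTop (𝓝 (h0 ξ)) := by
  have : Nonempty (ℕ × Ω) := ⟨(0, ξ)⟩
  have hup : ∀ N, lipEnv h N ξ ≤ h0 ξ := fun N =>
    ge_of_tendsto hpt ((eventually_ge_atTop N).mono fun ν hν => lipEnv_le hM hν ξ)
  refine tendsto_order.2 ⟨fun a ha => ?_, fun b hb => Eventually.of_forall fun N =>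
    (hup N).trans_lt hb⟩
  obtain ⟨a', ha', ha''⟩ := exists_between ha
  obtain ⟨pa, hpa, pb, hpb, hab⟩ := eventually_prod_iff.1 (hlow a' ha'')
  obtain ⟨N0, hN0⟩ := eventually_atTop.1 hpa
  obtain ⟨δ, hδ, hball⟩ := Metric.eventually_nhds_iff.1 hpb
  obtain ⟨N1, hN1⟩ := exists_nat_gt ((a' + M) / δ)
  filter_upwards [eventually_ge_atTop (max N0 N1)] with N hN
  refine ha'.trans_le (le_ciInf fun q => ?_)
  have h2 : 0 ≤ (N : ℝ) * dist ξ q.2 := by positivity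
  rcases lt_or_ge (dist q.2 ξ) δ with hd | hd
  · have := hab (hN0 (N + q.1) (by have := le_max_left N0 N1; omega)) (hball hd)
    simp only at this
    linarith
  · have h1 := (abs_le.1 (hM (N + q.1) q.2)).1
    have h3 : (a' + M) < N1 * δ := (div_lt_iff₀ hδ).1 hN1
    have h4 : (N1 : ℝ) ≤ N := by exact_mod_cast (le_max_right N0 N1).trans hN
    have h5 : (N1 : ℝ) * δ ≤ N * dist ξ q.2 := by
      rw [dist_comm] at hd
      exact mul_le_mul h4 hd hδ.le (Nat.cast_nonneg _)
    linarith

/-- Fatou's lemma for varying, uniformly bounded integrands: `∫ h_ν dP_ν ≥ ∫ lipEnv h N dP_ν` for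
`ν ≥ N`; weak convergence lets `ν → ∞`, dominated convergence lets `N → ∞`. -/
lemma fatou_weak_bounded {Ω : Type*} [PseudoMetricSpace Ω] [MeasurableSpace Ω] [BorelSpace Ω]
    {P : Measure Ω} {Pν : ℕ → Measure Ω} [IsProbabilityMeasure P]
    [∀ ν, IsProbabilityMeasure (Pν ν)] (hw : WeakConv Pν P)
    {h : ℕ → Ω → ℝ} {h0 : Ω → ℝ} {M : ℝ} (hM : ∀ ν ξ, |h ν ξ| ≤ M)
    (hmeas : ∀ ν, AEMeasurable (h ν) (Pν ν))
    (hlow : ∀ ξ, ∀ a < h0 ξ, ∀ᶠ p in atTop ×ˢ 𝓝 ξ, a < h p.1 p.2)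
    (hpt : ∀ ξ, Tendsto (fun ν => h ν ξ) atTop (𝓝 (h0 ξ)))
    {a : ℝ} (ha : a < ∫ ξ, h0 ξ ∂P) : ∀ᶠ ν in atTop, a < ∫ ξ, h ν ξ ∂(Pν ν) := by
  have hdct : Tendsto (fun N => ∫ ξ, lipEnv h N ξ ∂P) atTop (𝓝 (∫ ξ, h0 ξ ∂P)) :=
    tendsto_integral_of_dominated_convergence (fun _ => M)
      (fun N => (continuous_lipEnv hM N).measurable.aestronglyMeasurable) (integrable_const M)
      (fun N => Eventually.of_forall fun ξ => abs_lipEnv_le hM N ξ)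
      (Eventually.of_forall fun ξ => tendsto_lipEnv hM ξ (hlow ξ) (hpt ξ))
  obtain ⟨N, hN⟩ := (hdct.eventually (lt_mem_nhds ha)).exists
  filter_upwards [(hw _ (continuous_lipEnv hM N) ⟨M, abs_lipEnv_le hM N⟩).eventually
    (lt_mem_nhds hN), eventually_ge_atTop N] with ν hν hNν
  refine hν.trans_le (integral_mono ?_ ?_ fun ξ => lipEnv_le hM hNν ξ)
  · exact Integrable.of_bound (continuous_lipEnv hM N).measurable.aestronglyMeasurable M
      (Eventually.of_forall fun ξ => abs_lipEnv_le hM N ξ)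
  · exact Integrable.of_bound (hmeas ν).aestronglyMeasurable M
      (Eventually.of_forall fun ξ => hM ν ξ)

/-- The real number obtained by clamping `t` to the interval `[-M, M]`. -/
def clamp (M : ℝ) (t : EReal) : ℝ := (max ((-M : ℝ) : EReal) (min (M : EReal) t)).toReal

lemma coe_clamp (M : ℝ) (t : EReal) :
    (clamp M t : EReal) = max ((-M : ℝ) : EReal) (min (M : EReal) t) := by
  refine EReal.coe_toReal (ne_of_lt (max_lt (EReal.coe_lt_top _)
    (min_lt_of_left_lt (EReal.coe_lt_top _)))) (ne_of_gt (lt_max_of_lt_left (EReal.bot_lt_coe _)))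

lemma clamp_coe (M t : ℝ) : clamp M (t : EReal) = max (-M) (min M t) := by
  apply EReal.coe_injective
  rw [coe_clamp]
  push_cast
  rfl

lemma abs_clamp_le {M : ℝ} (hM : 0 ≤ M) (t : EReal) : |clamp M t| ≤ M := by
  have h := coe_clamp M t
  refine abs_le.2 ⟨?_, ?_⟩
  · rw [← EReal.coe_le_coe_iff, h]; exact le_max_left _ _
  · rw [← EReal.coe_le_coe_iff, h]
    exact max_le (EReal.coe_le_coe_iff.2 (by linarith)) (min_le_left _ _)

lemma continuous_clamp (M : ℝ) : Continuous (clamp M) := by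
  refine EReal.continuous_coe_iff.1 ?_
  simp_rw [coe_clamp]
  fun_prop

/-- Fatou's lemma for varying extended-real integrands: the lower tail is controlled by the
asymptotic inf-integrability condition `htail`, and the rest is the bounded case for the clamped
integrands. -/
lemma fatou_weak {Ω : Type*} [PseudoMetricSpace Ω] [MeasurableSpace Ω] [BorelSpace Ω]
    {P : Measure Ω} {Pν : ℕ → Measure Ω} [IsProbabilityMeasure P]
    [∀ ν, IsProbabilityMeasure (Pν ν)] (hw : WeakConv Pν P)
    {g : ℕ → Ω → EReal} {g0 : Ω → EReal}
    (hg : ∀ ν, EIntegrable (Pν ν) (g ν)) (hg0 : EIntegrable P g0)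
    (hlow : ∀ ξ, ∀ a < g0 ξ, ∀ᶠ p in atTop ×ˢ 𝓝 ξ, a < g p.1 p.2)
    (hpt : ∀ ξ, Tendsto (fun ν => g ν ξ) atTop (𝓝 (g0 ξ)))
    (htail : ∀ ε : ℝ, 0 < ε → ∃ αb : ℝ, ∀ α ≤ αb, ∀ᶠ ν in atTop,
      ((-ε : ℝ) : EReal) ≤ eintegral (Pν ν) (truncBelow (g ν) α))
    {a : EReal} (ha : a < eintegral P g0) : ∀ᶠ ν in atTop, a < eintegral (Pν ν) (g ν) := by
  obtain ⟨hi0, hae0, he0⟩ := toReal_integral_of_eIntegrable hg0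
  rw [he0] at ha
  obtain ⟨r, har, hr⟩ := EReal.lt_iff_exists_real_btwn.1 ha
  have hr' : r < ∫ ω, (g0 ω).toReal ∂P := EReal.coe_lt_coe_iff.1 hr
  obtain ⟨r', hrr', hr'I⟩ := exists_between hr'
  obtain ⟨αb, hαb⟩ := htail (r' - r) (sub_pos.2 hrr')
  -- truncation from above at a large level costs little of the limit integral
  have hdct : Tendsto (fun M : ℕ => ∫ ω, min (M : ℝ) (g0 ω).toReal ∂P) atTop
      (𝓝 (∫ ω, (g0 ω).toReal ∂P)) := by
    refine tendsto_integral_of_dominated_convergence (fun ω => |(g0 ω).toReal|)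
      (fun M => (aemeasurable_const.min hi0.aemeasurable).aestronglyMeasurable) hi0.abs
      (fun M => Eventually.of_forall fun ω => ?_) (Eventually.of_forall fun ω => ?_)
    · have : (0 : ℝ) ≤ M := Nat.cast_nonneg M
      refine abs_le.2 ⟨le_min ?_ (neg_abs_le _), (min_le_right _ _).trans (le_abs_self _)⟩
      linarith [abs_nonneg (g0 ω).toReal]
    · obtain ⟨K, hK⟩ := exists_nat_ge (g0 ω).toReal
      refine tendsto_const_nhds.congr' ?_
      filter_upwards [eventually_ge_atTop K] with M hM
      exact (min_eq_right (hK.trans (by exact_mod_cast hM))).symm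
  obtain ⟨K, hK⟩ := exists_nat_ge (-αb)
  obtain ⟨M, hM, hKM⟩ := ((hdct.eventually (lt_mem_nhds hr'I)).and (eventually_ge_atTop K)).exists
  have hM0 : (0 : ℝ) ≤ M := Nat.cast_nonneg M
  have hMα : -(M : ℝ) ≤ αb := by
    have : (K : ℝ) ≤ M := by exact_mod_cast hKM
    linarith
  have hclamp0 : r' < ∫ ω, clamp M (g0 ω) ∂P := by
    refine hM.trans_le (integral_mono_ae ?_ ?_ ?_)
    · exact hi0.abs.mono' (aemeasurable_const.min hi0.aemeasurable).aestronglyMeasurable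
        (Eventually.of_forall fun ω => by
          refine abs_le.2 ⟨le_min ?_ (neg_abs_le _), (min_le_right _ _).trans (le_abs_self _)⟩
          linarith [abs_nonneg (g0 ω).toReal])
    · exact Integrable.of_bound ((continuous_clamp M).measurable.comp_aemeasurable
        hg0.1).aestronglyMeasurable M (Eventually.of_forall fun ω => abs_clamp_le hM0 _)
    · filter_upwards [hae0] with ω hω
      rw [← hω, clamp_coe, EReal.toReal_coe]
      exact le_max_right _ _
  have hlowM : ∀ ξ, ∀ b < clamp M (g0 ξ), ∀ᶠ p in atTop ×ˢ 𝓝 ξ, b < clamp M (g p.1 p.2) := by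
    intro ξ b hb
    rw [← EReal.coe_lt_coe_iff, coe_clamp, lt_max_iff, lt_min_iff] at hb
    rcases hb with hb | ⟨hb1, hb2⟩
    · refine Eventually.of_forall fun p => ?_
      rw [← EReal.coe_lt_coe_iff, coe_clamp]
      exact lt_max_of_lt_left hb
    · filter_upwards [hlow ξ _ hb2] with p hp
      rw [← EReal.coe_lt_coe_iff, coe_clamp]
      exact lt_max_of_lt_right (lt_min hb1 hp)
  have hmain := fatou_weak_bounded hw (h := fun ν ω => clamp M (g ν ω))
    (h0 := fun ω => clamp M (g0 ω)) (M := M)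
    (fun ν ξ => abs_clamp_le hM0 _)
    (fun ν => (continuous_clamp M).measurable.comp_aemeasurable (hg ν).1)
    hlowM (fun ξ => ((continuous_clamp M).tendsto _).comp (hpt ξ)) hclamp0
  filter_upwards [hmain, hαb _ hMα] with ν h1 h2
  obtain ⟨hi, hae, he⟩ := toReal_integral_of_eIntegrable (hg ν)
  obtain ⟨hit, -, het⟩ := toReal_integral_of_eIntegrable ((hg ν).truncBelow (-M))
  rw [het, EReal.coe_le_coe_iff] at h2
  rw [he]
  refine har.trans (EReal.coe_lt_coe_iff.2 ?_)
  have hic : Integrable (fun ω => clamp M (g ν ω)) (Pν ν) :=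
    Integrable.of_bound ((continuous_clamp M).measurable.comp_aemeasurable
        (hg ν).1).aestronglyMeasurable M (Eventually.of_forall fun ω => abs_clamp_le hM0 _)
  -- pointwise, `g ≥ g·1{g ≤ -M} + clamp M g`
  have hsum : ∫ ω, ((truncBelow (g ν) (-M) ω).toReal + clamp M (g ν ω)) ∂(Pν ν)
      ≤ ∫ ω, (g ν ω).toReal ∂(Pν ν) := by
    refine integral_mono_ae (hit.add hic) hi ?_
    filter_upwards [hae] with ω hω
    have hc : clamp M (g ν ω) = max (-(M : ℝ)) (min M (g ν ω).toReal) := by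
      rw [← clamp_coe, hω]
    rw [hc]
    unfold truncBelow
    by_cases hle : g ν ω ≤ ((-M : ℝ) : EReal)
    · rw [if_pos hle]
      have : (g ν ω).toReal ≤ -M := by rwa [← EReal.coe_le_coe_iff, hω]
      have hmax : max (-(M : ℝ)) (min M (g ν ω).toReal) ≤ 0 :=
        max_le (by linarith) ((min_le_right _ _).trans (by linarith))
      linarith
    · rw [if_neg hle]
      have : -M < (g ν ω).toReal := by
        rw [← EReal.coe_lt_coe_iff, hω]; exact not_le.1 hle
      simp only [EReal.toReal_zero, zero_add]
      exact max_le this.le (min_le_right _ _)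
  rw [integral_add hit hic] at hsum
  linarith

/-! ### The Attouch–Wets distance controls epi-limits -/

/-- The supremum over the ball of radius `ρ` in the Attouch–Wets integrand dominates the value at `z`
once `ρ ≥ dist z zc`. It grows at most linearly in `ρ`, so the integrand is integrable and the
Bochner integral is not a junk value. -/
lemma infDist_sub_le_awDist {E : Type*} [PseudoMetricSpace E] (X : Set E) (zc : E × ℝ)
    (f g : E → EReal) (z : E × ℝ) :
    |Metric.infDist z (epiSet X f) - Metric.infDist z (epiSet X g)| * Real.exp (-dist z zc) ≤
      awDist X zc f g := by
  set u : E × ℝ → ℝ := fun z =>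
    |Metric.infDist z (epiSet X f) - Metric.infDist z (epiSet X g)| with hu
  set D : ℝ → ℝ := fun ρ => sSup (u '' Metric.closedBall zc ρ) with hD
  have hub : ∀ w, u w ≤ u zc + 2 * dist w zc := by
    intro w
    have h1 := Metric.infDist_le_infDist_add_dist (s := epiSet X f) (x := w) (y := zc)
    have h2 := Metric.infDist_le_infDist_add_dist (s := epiSet X f) (x := zc) (y := w)
    have h3 := Metric.infDist_le_infDist_add_dist (s := epiSet X g) (x := w) (y := zc)
    have h4 := Metric.infDist_le_infDist_add_dist (s := epiSet X g) (x := zc) (y := w)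
    have h5 := abs_le.1 (le_refl (u zc))
    rw [dist_comm zc w] at h2 h4
    refine abs_le.2 ⟨?_, ?_⟩ <;> linarith [h5.1, h5.2]
  have hbound : ∀ ρ, u zc + 2 * ρ ∈ upperBounds (u '' Metric.closedBall zc ρ) := by
    rintro ρ _ ⟨w, hw, rfl⟩
    have : dist w zc ≤ ρ := hw
    linarith [hub w]
  have hDle : ∀ ρ, ∀ w, dist w zc ≤ ρ → u w ≤ D ρ := fun ρ w hw =>
    le_csSup ⟨_, hbound ρ⟩ ⟨w, hw, rfl⟩
  have hD0 : ∀ ρ, 0 ≤ D ρ := fun ρ => Real.sSup_nonneg (by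
    rintro _ ⟨w, -, rfl⟩
    exact abs_nonneg _)
  have hDup : ∀ ρ, 0 ≤ ρ → D ρ ≤ u zc + 2 * ρ := fun ρ hρ =>
    csSup_le ⟨_, zc, Metric.mem_closedBall_self hρ, rfl⟩ (hbound ρ)
  have hmono : Monotone D := by
    intro ρ ρ' h
    rcases lt_or_ge ρ 0 with hρ | hρ
    · have : D ρ = 0 := by simp [hD, Metric.closedBall_eq_empty.2 hρ]
      rw [this]; exact hD0 _
    · exact csSup_le_csSup ⟨_, hbound ρ'⟩ ⟨_, zc, Metric.mem_closedBall_self hρ, rfl⟩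
        (image_mono (Metric.closedBall_subset_closedBall h))
  have hexp : IntegrableOn (fun ρ : ℝ => Real.exp (-ρ)) (Ioi 0) :=
    integrableOn_exp_neg_Ioi 0
  have hrexp : IntegrableOn (fun ρ : ℝ => Real.exp (-ρ) * ρ) (Ioi 0) := by
    have := Real.GammaIntegral_convergent (s := 2) (by norm_num)
    refine this.congr_fun (fun ρ _ => ?_) measurableSet_Ioi
    norm_num
  have hint : IntegrableOn (fun ρ => D ρ * Real.exp (-ρ)) (Ioi 0) := by
    refine Integrable.mono' ((hexp.const_mul (u zc)).add (hrexp.const_mul 2))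
      (hmono.measurable.mul (by fun_prop)).aestronglyMeasurable ?_
    filter_upwards [ae_restrict_mem measurableSet_Ioi] with ρ hρ
    rw [Real.norm_of_nonneg (mul_nonneg (hD0 ρ) (Real.exp_pos _).le)]
    have := mul_le_mul_of_nonneg_right (hDup ρ (le_of_lt hρ)) (Real.exp_pos (-ρ)).le
    simp only [Pi.add_apply]
    nlinarith
  have hsub : Ioi (dist z zc) ⊆ Ioi (0 : ℝ) := Ioi_subset_Ioi dist_nonneg
  calc u z * Real.exp (-dist z zc) = ∫ ρ in Ioi (dist z zc), u z * Real.exp (-ρ) := by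
        rw [integral_const_mul, integral_exp_neg_Ioi]
    _ ≤ ∫ ρ in Ioi (dist z zc), D ρ * Real.exp (-ρ) := by
        refine setIntegral_mono_on ((hexp.mono_set hsub).const_mul _) (hint.mono_set hsub)
          measurableSet_Ioi fun ρ hρ => ?_
        exact mul_le_mul_of_nonneg_right (hDle ρ z (le_of_lt hρ)) (Real.exp_pos _).le
    _ ≤ ∫ ρ in Ioi (0 : ℝ), D ρ * Real.exp (-ρ) := by
        refine setIntegral_mono_set hint ?_ hsub.eventuallyLE
        exact Eventually.of_forall fun ρ => mul_nonneg (hD0 ρ) (Real.exp_pos _).le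

lemma tendsto_infDist_of_awDist {E : Type*} [PseudoMetricSpace E] {X : Set E} {zc : E × ℝ}
    {F : ℕ → E → EReal} {W : E → EReal}
    (h : Tendsto (fun κ => awDist X zc (F κ) W) atTop (𝓝 0)) (z : E × ℝ) :
    Tendsto (fun κ => Metric.infDist z (epiSet X (F κ))) atTop
      (𝓝 (Metric.infDist z (epiSet X W))) := by
  rw [tendsto_iff_dist_tendsto_zero]
  have h2 := h.mul_const (Real.exp (dist z zc))
  rw [zero_mul] at h2
  refine squeeze_zero (fun _ => dist_nonneg) (fun κ => ?_) h2
  have := mul_le_mul_of_nonneg_right (infDist_sub_le_awDist X zc (F κ) W z)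
    (Real.exp_pos (dist z zc)).le
  rwa [mul_assoc, ← Real.exp_add, neg_add_cancel, Real.exp_zero, mul_one] at this

lemma epiSet_nonempty {E : Type*} [TopologicalSpace E] {X : Set E} {f : E → EReal}
    (hf : LscFcnOn X f) : (epiSet X f).Nonempty := by
  obtain ⟨x, hx, hfx⟩ := hf.2
  obtain ⟨r, hr, -⟩ := EReal.lt_iff_exists_real_btwn.1 (lt_top_iff_ne_top.2 hfx)
  exact ⟨(x, r), hx, hr.le⟩

lemma isClosed_epiSet {E : Type*} [TopologicalSpace E] {X : Set E} (hX : IsClosed X)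
    {f : E → EReal} (hf : LscFcnOn X f) : IsClosed (epiSet X f) :=
  ((lowerSemicontinuousOn_iff_isClosed_epigraph hX).1 hf.1).preimage
    (f := fun p : E × ℝ => (p.1, (p.2 : EReal)))
    (continuous_fst.prodMk (continuous_coe_real_ereal.comp continuous_snd))

/-- An Attouch–Wets limit of a subsequence of an epi-convergent sequence is the epi-limit. -/
lemma epi_limit_eq_aw_limit {E : Type*} [PseudoMetricSpace E] {X : Set E} (hX : IsClosed X)
    {zc : E × ℝ} {F : ℕ → E → EReal} {V W : E → EReal} (hF : ∀ κ, LscFcnOn X (F κ))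
    (hW : LscFcnOn X W) (hV : EpiConvergesOn X F V) {τ : ℕ → ℕ} (hτ : StrictMono τ)
    (h : Tendsto (fun κ => awDist X zc (F (τ κ)) W) atTop (𝓝 0)) {x : E} (hx : x ∈ X) :
    W x = V x := by
  have hdist := fun z => tendsto_infDist_of_awDist (F := fun κ => F (τ κ)) h z
  apply le_antisymm
  · obtain ⟨zs, hzs, hlim, hsup⟩ := (hV x hx).2
    refine le_of_forall_gt fun b hb => ?_
    obtain ⟨r, hr, hrb⟩ := EReal.lt_iff_exists_real_btwn.1 hb
    refine lt_of_le_of_lt ?_ hrb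
    have hev := hτ.tendsto_atTop.eventually (eventually_lt_of_limsup_lt (hsup.trans_lt hr))
    have h0 : Metric.infDist (x, r) (epiSet X W) ≤ 0 := by
      refine le_of_tendsto_of_tendsto (hdist (x, r))
        ((tendsto_iff_dist_tendsto_zero.1 hlim).comp hτ.tendsto_atTop) ?_
      filter_upwards [hev] with κ hκ
      have hm : (zs (τ κ), r) ∈ epiSet X (F (τ κ)) := ⟨hzs _, hκ.le⟩
      refine (Metric.infDist_le_dist_of_mem hm).trans ?_
      simp [Prod.dist_eq, dist_comm]
    exact (((isClosed_epiSet hX hW).mem_iff_infDist_zero (epiSet_nonempty hW)).2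
      (le_antisymm h0 Metric.infDist_nonneg)).2
  · refine le_of_forall_gt fun b hb => ?_
    obtain ⟨r, hr, hrb⟩ := EReal.lt_iff_exists_real_btwn.1 hb
    refine lt_of_le_of_lt ?_ hrb
    have hm : (x, r) ∈ epiSet X W := ⟨hx, hr.le⟩
    have h0 := hdist (x, r)
    rw [Metric.infDist_zero_of_mem hm] at h0
    have hex : ∀ κ : ℕ, ∃ p ∈ epiSet X (F (τ κ)), dist (x, r) p <
        Metric.infDist (x, r) (epiSet X (F (τ κ))) + 1 / ((κ : ℝ) + 1) := fun κ =>
      (Metric.infDist_lt_iff (epiSet_nonempty (hF _))).1 (lt_add_of_pos_right _ (by positivity))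
    choose p hp hpd using hex
    have hpl : Tendsto p atTop (𝓝 (x, r)) := by
      rw [tendsto_iff_dist_tendsto_zero]
      have h1 := h0.add tendsto_one_div_add_atTop_nhds_zero_nat
      rw [add_zero] at h1
      refine squeeze_zero (fun _ => dist_nonneg) (fun κ => ?_) h1
      rw [dist_comm]; exact (hpd κ).le
    have hp1 : Tendsto (fun κ => (p κ).1) atTop (𝓝[X] x) :=
      tendsto_nhdsWithin_iff.2 ⟨(continuous_fst.tendsto _).comp hpl,
        Eventually.of_forall fun κ => (hp κ).1⟩
    have hp2 : Tendsto (fun κ => ((p κ).2 : EReal)) atTop (𝓝 (r : EReal)) :=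
      (continuous_coe_real_ereal.tendsto _).comp ((continuous_snd.tendsto _).comp hpl)
    refine le_of_forall_lt fun a ha => ?_
    obtain ⟨a', haa', ha'⟩ := exists_between ha
    refine haa'.trans_le (ge_of_tendsto hp2 ?_)
    filter_upwards [(hτ.tendsto_atTop.prodMk hp1).eventually (lower_of_epi hV hx ha')] with κ hκ
    exact hκ.le.trans (hp κ).2

/-! ### Completing a subsequence to a full sequence -/

lemma eventually_of_subseq {σ : ℕ → ℕ} (hσ : StrictMono σ) {p : ℕ → Prop}
    (h : ∀ᶠ κ in atTop, p κ) : ∀ᶠ ν in atTop, ∀ κ, σ κ = ν → p κ := by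
  obtain ⟨K, hK⟩ := eventually_atTop.1 h
  filter_upwards [eventually_ge_atTop (σ K)] with ν hν κ hκ
  exact hK κ (hσ.le_iff_le.1 (hκ ▸ hν))

open Classical in
/-- The sequence equal to `F ν` for `ν` in the range of `σ` and to the constant `W` elsewhere. -/
def fillIn {E : Type*} (σ : ℕ → ℕ) (F : ℕ → E → EReal) (W : E → EReal) (ν : ℕ) : E → EReal :=
  if ν ∈ Set.range σ then F ν else W

lemma fillIn_apply {E : Type*} (σ : ℕ → ℕ) (F : ℕ → E → EReal) (W : E → EReal) (κ : ℕ) :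
    fillIn σ F W (σ κ) = F (σ κ) := by simp [fillIn]

/-- Padding an epi-convergent subsequence by its (lsc) limit gives an epi-convergent sequence. -/
lemma epi_fillIn {E : Type*} [PseudoMetricSpace E] {X : Set E} {σ : ℕ → ℕ} (hσ : StrictMono σ)
    {F : ℕ → E → EReal} {W : E → EReal} (hW : LowerSemicontinuousOn W X)
    (h : EpiConvergesOn X (fun κ => F (σ κ)) W) : EpiConvergesOn X (fillIn σ F W) W := by
  intro z hz
  constructor
  · intro zs hzs hlim
    refine le_of_forall_lt fun a ha => ?_
    obtain ⟨a', haa', ha'⟩ := exists_between ha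
    refine haa'.trans_le (le_liminf_of_le (h := ?_))
    obtain ⟨pa, hpa, pb, hpb, hab⟩ := eventually_prod_iff.1 (lower_of_epi h hz ha')
    have hlim' : Tendsto zs atTop (𝓝[X] z) :=
      tendsto_nhdsWithin_iff.2 ⟨hlim, Eventually.of_forall hzs⟩
    filter_upwards [eventually_of_subseq hσ hpa, hlim'.eventually hpb,
      hlim'.eventually (hW z hz a' ha')] with ν h1 h2 h3
    by_cases hν : ν ∈ Set.range σ
    · obtain ⟨κ, rfl⟩ := hν
      rw [fillIn_apply]
      exact (hab (h1 κ rfl) h2).le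
    · simp only [fillIn, if_neg hν]
      exact h3.le
  · obtain ⟨zs, hzs, hlim, hsup⟩ := (h z hz).2
    have e1 : ∀ κ, Function.extend σ zs (fun _ => z) (σ κ) = zs κ := fun κ =>
      hσ.injective.extend_apply _ _ κ
    have e2 : ∀ ν, ν ∉ Set.range σ → Function.extend σ zs (fun _ => z) ν = z := fun ν hν =>
      Function.extend_apply' _ _ _ hν
    refine ⟨Function.extend σ zs (fun _ => z), fun ν => ?_, fun U hU => ?_, ?_⟩
    · by_cases hν : ν ∈ Set.range σ
      · obtain ⟨κ, rfl⟩ := hν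
        rw [e1]; exact hzs κ
      · rw [e2 ν hν]; exact hz
    · refine (eventually_of_subseq hσ (hlim hU)).mono fun ν h1 => ?_
      by_cases hν : ν ∈ Set.range σ
      · obtain ⟨κ, rfl⟩ := hν
        change Function.extend σ zs (fun _ => z) (σ κ) ∈ U
        rw [e1]; exact h1 κ rfl
      · change Function.extend σ zs (fun _ => z) ν ∈ U
        rw [e2 ν hν]; exact mem_of_mem_nhds hU
    · refine le_of_forall_gt fun b hb => ?_
      obtain ⟨b', hb', hbb'⟩ := exists_between hb
      refine lt_of_le_of_lt (limsup_le_of_le (h := ?_)) hbb'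
      filter_upwards [eventually_of_subseq hσ (eventually_lt_of_limsup_lt (hsup.trans_lt hb'))]
        with ν h1
      by_cases hν : ν ∈ Set.range σ
      · obtain ⟨κ, rfl⟩ := hν
        rw [e1, fillIn_apply]; exact (h1 κ rfl).le
      · rw [e2 ν hν]
        simp only [fillIn, if_neg hν]
        exact hb'.le

/-! ### Convergence of the one-stage problems -/

/-- The lower half of epi-convergence passes to the stage objective in the decision `y`,
with the state `x` and the noise `ξ` fixed. -/
lemma stage_lower {E S : Type*} [PseudoMetricSpace E] [PseudoMetricSpace S] {X : Set E}
    {β : ℝ} (hβ : 0 < β) {φ : E → E → S → ℝ} {φν : ℕ → E → E → S → ℝ}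
    (hφe : EpiConvergesOn (X ×ˢ X ×ˢ (univ : Set S))
      (fun ν p => ((φν ν p.1 p.2.1 p.2.2 : ℝ) : EReal))
      (fun p => ((φ p.1 p.2.1 p.2.2 : ℝ) : EReal)))
    {F : ℕ → E → EReal} {W : E → EReal} (hF : EpiConvergesOn X F W)
    {x y : E} (hx : x ∈ X) (hy : y ∈ X) (ξ : S) {a : EReal}
    (ha : a < ((φ x y ξ : ℝ) : EReal) + (β : EReal) * W y) :
    ∀ᶠ q in atTop ×ˢ 𝓝[X] y, a < ((φν q.1 x q.2 ξ : ℝ) : EReal) + (β : EReal) * F q.1 q.2 := by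
  have hmap : Tendsto (fun w : E => (x, w, ξ)) (𝓝[X] y) (𝓝[X ×ˢ X ×ˢ (univ : Set S)] (x, y, ξ)) :=
    tendsto_nhdsWithin_iff.2 ⟨(Continuous.tendsto (by fun_prop) y).mono_left nhdsWithin_le_nhds,
      eventually_mem_nhdsWithin.mono fun w hw => ⟨hx, hw, mem_univ _⟩⟩
  have hmap' := (tendsto_id (x := atTop (α := ℕ))).prodMap hmap
  refine eventually_stage hβ (u := fun q : ℕ × E => φν q.1 x q.2 ξ) (v := fun q => F q.1 q.2)
    (fun b hb => ?_) (fun b hb => lower_of_epi hF hy hb) ha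
  exact hmap'.eventually (lower_of_epi hφe (z := (x, y, ξ)) ⟨hx, hy, mem_univ _⟩ hb)

/-- The infimum over the compact set `Y x ξ` converges: the lower bound is uniform on a compact set,
and the upper bound follows from pointwise convergence at a near-minimizer. -/
lemma tendsto_bop {E S : Type*} [PseudoMetricSpace E] {X : Set E}
    {Y : E → S → Set E} {β : ℝ} {φ : E → E → S → ℝ} {φν : ℕ → E → E → S → ℝ}
    {F : ℕ → E → EReal} {W : E → EReal} {x : E} {ξ : S} (hK : IsCompact (Y x ξ))
    (hYX : Y x ξ ⊆ X)
    (hlow : ∀ y ∈ X, ∀ a : EReal, a < ((φ x y ξ : ℝ) : EReal) + (β : EReal) * W y →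
      ∀ᶠ q in atTop ×ˢ 𝓝[X] y, a < ((φν q.1 x q.2 ξ : ℝ) : EReal) + (β : EReal) * F q.1 q.2)
    (hpt : ∀ y ∈ X, Tendsto (fun ν => ((φν ν x y ξ : ℝ) : EReal) + (β : EReal) * F ν y) atTop
      (𝓝 (((φ x y ξ : ℝ) : EReal) + (β : EReal) * W y))) :
    Tendsto (fun ν => bop Y β (φν ν) (F ν) x ξ) atTop (𝓝 (bop Y β φ W x ξ)) := by
  refine tendsto_order.2 ⟨fun a ha => ?_, fun b hb => ?_⟩
  · obtain ⟨a', haa', ha'⟩ := exists_between ha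
    have hev := eventually_forall_compact hK (l := atTop)
      (p := fun ν y => a' < ((φν ν x y ξ : ℝ) : EReal) + (β : EReal) * F ν y) fun y hy =>
      (hlow y (hYX hy) a' (ha'.trans_le (iInf₂_le y hy))).filter_mono
        (prod_mono le_rfl (nhdsWithin_mono y hYX))
    filter_upwards [hev] with ν hν
    exact haa'.trans_le (le_iInf₂ fun y hy => (hν y hy).le)
  · simp only [bop, iInf_lt_iff] at hb
    obtain ⟨y, hy, hyb⟩ := hb
    filter_upwards [(hpt y (hYX hy)).eventually (gt_mem_nhds hyb)] with ν hν
    exact (iInf₂_le y hy).trans_lt hν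

/-- The asymptotic inf-integrability condition, specialized to the fixed state `xb`. -/
lemma tail_below {E S : Type*} [PseudoMetricSpace E] [MeasurableSpace S] {X : Set E} {xb : E}
    (hxb : xb ∈ X) {Pν : ℕ → Measure S} {g : ℕ → E → S → EReal}
    (h : liminfAlphaBot (fun α => liminfNuX X xb (fun ν x =>
      eintegral (Pν ν) (truncBelow (g ν x) α))) = 0) (ε : ℝ) (hε : 0 < ε) :
    ∃ αb : ℝ, ∀ α ≤ αb, ∀ᶠ ν in atTop,
      ((-ε : ℝ) : EReal) ≤ eintegral (Pν ν) (truncBelow (g ν xb) α) := by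
  have hlt : ((-ε : ℝ) : EReal) < 0 := by exact_mod_cast neg_lt_zero.2 hε
  rw [← h] at hlt
  obtain ⟨αb, hαb⟩ := lt_iSup_iff.1 hlt
  refine ⟨αb, fun α hα => ?_⟩
  have h1 := hαb.trans_le (iInf₂_le α hα)
  unfold liminfNuX at h1
  simp only [lt_iSup_iff] at h1
  obtain ⟨δ, hδ, ν', h2⟩ := h1
  filter_upwards [eventually_ge_atTop ν'] with ν hν
  refine h2.le.trans ((iInf₂_le ν hν).trans ((iInf₂_le xb hxb).trans (iInf_le _ ?_)))
  rw [dist_self]; exact hδ.le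

/-- The asymptotic sup-integrability condition of `g` is a lower-tail condition on `-g`. -/
lemma tail_above {S : Type*} [MeasurableSpace S] {Pν : ℕ → Measure S} {g : ℕ → S → EReal}
    (hg : ∀ ν, EIntegrable (Pν ν) (g ν))
    (h : limsupAlphaTop (fun α => limsupNu (fun ν =>
      eintegral (Pν ν) (truncAbove (g ν) α))) = 0) (ε : ℝ) (hε : 0 < ε) :
    ∃ αb : ℝ, ∀ α ≤ αb, ∀ᶠ ν in atTop,
      ((-ε : ℝ) : EReal) ≤ eintegral (Pν ν) (truncBelow (fun ξ => -g ν ξ) α) := by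
  have hlt : (0 : EReal) < (ε : EReal) := by exact_mod_cast hε
  rw [← h] at hlt
  obtain ⟨αb, hαb⟩ := iInf_lt_iff.1 hlt
  refine ⟨-αb, fun α hα => ?_⟩
  have h1 := (le_iSup₂ (f := fun (α : ℝ) (_ : αb ≤ α) => limsupNu (fun ν =>
    eintegral (Pν ν) (truncAbove (g ν) α))) (-α) (by linarith)).trans_lt hαb
  obtain ⟨ν', h2⟩ := iInf_lt_iff.1 h1
  filter_upwards [eventually_ge_atTop ν'] with ν hν
  have h3 := (le_iSup₂ (f := fun (ν : ℕ) (_ : ν' ≤ ν) =>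
    eintegral (Pν ν) (truncAbove (g ν) (-α))) ν hν).trans h2.le
  rw [truncBelow_neg, eintegral_neg ((hg ν).truncAbove _), EReal.coe_neg]
  exact EReal.neg_le_neg_iff.2 h3

/-- Consistency of approximating decision rules along epi-convergent
subsequences. -/
theorem decision_rule_consistency_along_subsequence {n m : ℕ}
    (X : Set (EuclideanSpace ℝ (Fin n))) (hX : IsClosed X)
    (Ξ : Set (EuclideanSpace ℝ (Fin m))) (hΞ : IsClosed Ξ)
    (Y : EuclideanSpace ℝ (Fin n) → Ξ → Set (EuclideanSpace ℝ (Fin n)))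
    (hY : ∀ x ∈ X, ∀ ξ : Ξ, (Y x ξ).Nonempty ∧ IsCompact (Y x ξ) ∧ Y x ξ ⊆ X)
    (β : ℝ) (hβ : β ∈ Set.Ioo (0 : ℝ) 1)
    (φ : EuclideanSpace ℝ (Fin n) → EuclideanSpace ℝ (Fin n) → Ξ → ℝ)
    (φν : ℕ → EuclideanSpace ℝ (Fin n) → EuclideanSpace ℝ (Fin n) → Ξ → ℝ)
    (P : Measure Ξ) (Pν : ℕ → Measure Ξ)
    [IsProbabilityMeasure P] [∀ ν, IsProbabilityMeasure (Pν ν)]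
    (zc : EuclideanSpace ℝ (Fin n) × ℝ)
    (𝒱 : Set (EuclideanSpace ℝ (Fin n) → EReal))
    (h𝒱lsc : ∀ V ∈ 𝒱, LscFcnOn X V)
    -- Assumption 2
    (hA2 : ∀ V ∈ 𝒱, (∀ x ∈ X, EIntegrable P (bop Y β φ V x)) ∧
      (fun x => eintegral P (bop Y β φ V x)) ∈ 𝒱)
    (hA2ν : ∀ ν, ∀ V ∈ 𝒱, (∀ x ∈ X, EIntegrable (Pν ν) (bop Y β (φν ν) V x)) ∧
      (fun x => eintegral (Pν ν) (bop Y β (φν ν) V x)) ∈ 𝒱)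
    -- 𝒱 is closed under the Attouch–Wets distance
    (h𝒱closed : DlSeqClosed X zc 𝒱)
    -- convergence of the data
    (hweak : WeakConv Pν P)
    (hφe : EpiConvergesOn (X ×ˢ X ×ˢ (univ : Set Ξ))
      (fun ν p => ((φν ν p.1 p.2.1 p.2.2 : ℝ) : EReal))
      (fun p => ((φ p.1 p.2.1 p.2.2 : ℝ) : EReal)))
    (hφp : ∀ x ∈ X, ∀ y ∈ X, ∀ ξ : Ξ,
      Tendsto (fun ν => φν ν x y ξ) atTop (𝓝 (φ x y ξ)))
    -- every epi-convergent sequence in 𝒱 is equi-lsc and satisfies (i) and (ii)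
    (hequi : ∀ Vs : ℕ → (EuclideanSpace ℝ (Fin n) → EReal),
      (∀ ν, Vs ν ∈ 𝒱) → (∃ W, EpiConvergesOn X Vs W) →
      EquiLscOn X Vs ∧
      (∀ xb ∈ X, liminfAlphaBot (fun α => liminfNuX X xb (fun ν x =>
        eintegral (Pν ν) (truncBelow (bop Y β (φν ν) (Vs ν) x) α))) = 0) ∧
      (∀ ν, LowerSemicontinuousOn
        (fun p : EuclideanSpace ℝ (Fin n) × Ξ => bop Y β (φν ν) (Vs ν) p.1 p.2)
        (X ×ˢ (univ : Set Ξ))) ∧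
      EquiLscOn (X ×ˢ (univ : Set Ξ)) (fun ν p => bop Y β (φν ν) (Vs ν) p.1 p.2) ∧
      (∀ xb ∈ X,
        limsupAlphaTop (fun α => limsupNu (fun ν =>
          eintegral (Pν ν) (truncAbove (bop Y β (φν ν) (Vs ν) xb) α))) = 0 ∧
        (∀ ν, UpperSemicontinuous (fun ξ : Ξ => bop Y β (φν ν) (Vs ν) xb ξ)) ∧
        EquiUscOn (univ : Set Ξ) (fun ν ξ => bop Y β (φν ν) (Vs ν) xb ξ)))
    -- 𝒱 is compact under the Attouch–Wets distance and each B_ν has a fixed point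
    (hcompact : DlSeqCompact X zc 𝒱)
    (Vs : ℕ → (EuclideanSpace ℝ (Fin n) → EReal))
    (hfix : ∀ ν, Vs ν ∈ 𝒱 ∧ ∀ x ∈ X, Vs ν x = eintegral (Pν ν) (bop Y β (φν ν) (Vs ν) x))
    -- a subsequence epi-converging to V
    (σ : ℕ → ℕ) (hσ : StrictMono σ)
    (V : EuclideanSpace ℝ (Fin n) → EReal)
    (hconv : EpiConvergesOn X (fun κ => Vs (σ κ)) V) :
    (∀ x ∈ X, V x = eintegral P (bop Y β φ V x)) ∧
    ∀ x ∈ X, ∀ ξ : Ξ,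
      OuterLimit (fun κ => ArgminOn (Y x ξ)
          (fun y => ((φν (σ κ) x y ξ : ℝ) : EReal) + (β : EReal) * Vs (σ κ) y)) ⊆
        ArgminOn (Y x ξ) (fun y => ((φ x y ξ : ℝ) : EReal) + (β : EReal) * V y) ∧
      (ArgminOn (Y x ξ)
        (fun y => ((φ x y ξ : ℝ) : EReal) + (β : EReal) * V y)).Nonempty := by
  have hβ0 : 0 < β := hβ.1
  have hF : ∀ κ, Vs (σ κ) ∈ 𝒱 := fun κ => (hfix _).1
  -- the epi-limit agrees on `X` with a member `W` of `𝒱`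
  obtain ⟨W, hW, τ, hτ, hτlim⟩ := hcompact (fun κ => Vs (σ κ)) hF
  have hWV : ∀ x ∈ X, W x = V x := fun x hx =>
    epi_limit_eq_aw_limit hX (fun κ => h𝒱lsc _ (hF κ)) (h𝒱lsc W hW) hconv hτ hτlim hx
  have hconvW : EpiConvergesOn X (fun κ => Vs (σ κ)) W := by
    intro z hz
    rw [hWV z hz]
    exact hconv z hz
  set F : ℕ → EuclideanSpace ℝ (Fin n) → EReal := fillIn σ Vs W with hFdef
  have hFσ : ∀ κ, F (σ κ) = Vs (σ κ) := fillIn_apply σ Vs W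
  have hFmem : ∀ ν, F ν ∈ 𝒱 := by
    intro ν
    rw [hFdef]
    unfold fillIn
    split_ifs
    · exact (hfix ν).1
    · exact hW
  have hFW : EpiConvergesOn X F W := epi_fillIn hσ (h𝒱lsc W hW).1 hconvW
  obtain ⟨hFlsc, htailb, -, hblsc, hab⟩ := hequi F hFmem ⟨W, hFW⟩
  have hFpt : ∀ x ∈ X, Tendsto (fun ν => F ν x) atTop (𝓝 (W x)) := fun x hx =>
    tendsto_of_equiLsc hFW hFlsc hx
  have hlow : ∀ x ∈ X, ∀ ξ : Ξ, ∀ y ∈ X, ∀ a : EReal,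
      a < ((φ x y ξ : ℝ) : EReal) + (β : EReal) * W y →
      ∀ᶠ q in atTop ×ˢ 𝓝[X] y, a < ((φν q.1 x q.2 ξ : ℝ) : EReal) + (β : EReal) * F q.1 q.2 :=
    fun x hx ξ y hy a ha => stage_lower hβ0 hφe hFW hx hy ξ ha
  have hpt : ∀ x ∈ X, ∀ ξ : Ξ, ∀ y ∈ X,
      Tendsto (fun ν => ((φν ν x y ξ : ℝ) : EReal) + (β : EReal) * F ν y) atTop
        (𝓝 (((φ x y ξ : ℝ) : EReal) + (β : EReal) * W y)) :=
    fun x hx ξ y hy => tendsto_stage (hφp x hx y hy ξ) (hFpt y hy)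
  have hbpt : ∀ x ∈ X, ∀ ξ : Ξ,
      Tendsto (fun ν => bop Y β (φν ν) (F ν) x ξ) atTop (𝓝 (bop Y β φ W x ξ)) :=
    fun x hx ξ => tendsto_bop (hY x hx ξ).2.1 (hY x hx ξ).2.2 (hlow x hx ξ) (hpt x hx ξ)
  have hbW : ∀ x ∈ X, ∀ ξ : Ξ, bop Y β φ W x ξ = bop Y β φ V x ξ := fun x hx ξ =>
    iInf_congr fun y => iInf_congr fun hy => by rw [hWV y ((hY x hx ξ).2.2 hy)]
  refine ⟨fun x hx => ?_, fun x hx ξ => ?_⟩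
  · -- `B_ν (F ν) x → B W x`: Fatou applied to `b_ν` and to `-b_ν`
    obtain ⟨htaila, -, husc⟩ := hab x hx
    have hgi : ∀ ν, EIntegrable (Pν ν) (bop Y β (φν ν) (F ν) x) := fun ν =>
      (hA2ν ν (F ν) (hFmem ν)).1 x hx
    have hgi0 : EIntegrable P (bop Y β φ W x) := (hA2 W hW).1 x hx
    have hlo : ∀ ξ : Ξ, ∀ a < bop Y β φ W x ξ,
        ∀ᶠ p in atTop ×ˢ 𝓝 ξ, a < bop Y β (φν p.1) (F p.1) x p.2 := by
      intro ξ a ha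
      have hmap : Tendsto (fun w : Ξ => (x, w)) (𝓝 ξ) (𝓝[X ×ˢ (univ : Set Ξ)] (x, ξ)) :=
        tendsto_nhdsWithin_iff.2 ⟨Continuous.tendsto (by fun_prop) ξ,
          Eventually.of_forall fun w => ⟨hx, mem_univ _⟩⟩
      exact ((tendsto_id (x := atTop (α := ℕ))).prodMap hmap).eventually
        (lower_of_equiLsc hblsc (z := (x, ξ)) ⟨hx, mem_univ _⟩ (hbpt x hx ξ) ha)
    have hup : ∀ ξ : Ξ, ∀ a < -bop Y β φ W x ξ,
        ∀ᶠ p in atTop ×ˢ 𝓝 ξ, a < -bop Y β (φν p.1) (F p.1) x p.2 := by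
      intro ξ a ha
      have := lower_of_equiLsc husc (z := ξ) (mem_univ _)
        ((continuous_neg.tendsto _).comp (hbpt x hx ξ)) ha
      rwa [nhdsWithin_univ] at this
    have hB : Tendsto (fun ν => eintegral (Pν ν) (bop Y β (φν ν) (F ν) x)) atTop
        (𝓝 (eintegral P (bop Y β φ W x))) := by
      refine tendsto_order.2 ⟨fun a ha => ?_, fun b hb => ?_⟩
      · exact fatou_weak hweak hgi hgi0 hlo (hbpt x hx) (tail_below hx (htailb x hx)) ha
      · have hb' : -b < eintegral P (fun ξ => -bop Y β φ W x ξ) := by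
          rw [eintegral_neg hgi0]
          exact EReal.neg_lt_neg_iff.2 hb
        filter_upwards [fatou_weak hweak (fun ν => (hgi ν).neg) hgi0.neg hup
          (fun ξ => (continuous_neg.tendsto _).comp (hbpt x hx ξ))
          (tail_above hgi htaila) hb'] with ν hν
        rw [eintegral_neg (hgi ν)] at hν
        exact EReal.neg_lt_neg_iff.1 hν
    have h1 : Tendsto (fun κ => Vs (σ κ) x) atTop (𝓝 (eintegral P (bop Y β φ W x))) := by
      refine (hB.comp hσ.tendsto_atTop).congr fun κ => ?_
      simp only [Function.comp_apply]
      rw [hFσ κ, ← (hfix (σ κ)).2 x hx]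
    have h2 : Tendsto (fun κ => Vs (σ κ) x) atTop (𝓝 (W x)) :=
      ((hFpt x hx).comp hσ.tendsto_atTop).congr fun κ => by
        simp only [Function.comp_apply]
        rw [hFσ κ]
    rw [← hWV x hx, tendsto_nhds_unique h2 h1]
    exact congrArg _ (funext fun ξ => hbW x hx ξ)
  · obtain ⟨hne, hK, hYX⟩ := hY x hx ξ
    constructor
    · rintro y ⟨ψ, hψ, s, hs, hlim⟩
      have hyY : y ∈ Y x ξ := hK.isClosed.mem_of_tendsto hlim (Eventually.of_forall fun κ =>
        (hs κ).1)
      refine ⟨hyY, fun z hz => ?_⟩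
      simp only [← hWV y (hYX hyY), ← hWV z (hYX hz)]
      have hsub : Tendsto (fun κ => σ (ψ κ)) atTop atTop :=
        hσ.tendsto_atTop.comp hψ.tendsto_atTop
      have hs' : Tendsto s atTop (𝓝[X] y) :=
        tendsto_nhdsWithin_iff.2 ⟨hlim, Eventually.of_forall fun κ => hYX (hs κ).1⟩
      refine le_of_forall_lt fun a ha => ?_
      obtain ⟨a', haa', ha'⟩ := exists_between ha
      refine haa'.trans_le (ge_of_tendsto ((hpt x hx ξ z (hYX hz)).comp hsub) ?_)
      filter_upwards [(hsub.prodMk hs').eventually (hlow x hx ξ y (hYX hyY) a' ha')] with κ hκ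
      have h1 := (hs κ).2 z hz
      rw [hFσ] at hκ
      simp only [Function.comp_apply]
      rw [hFσ]
      exact hκ.le.trans h1
    · have hlsc : LowerSemicontinuousOn
          (fun y => ((φ x y ξ : ℝ) : EReal) + (β : EReal) * V y) (Y x ξ) := by
        intro y hy a ha
        simp only [← hWV y (hYX hy)] at ha
        obtain ⟨a', haa', ha'⟩ := exists_between ha
        obtain ⟨pa, hpa, pb, hpb, hab'⟩ :=
          eventually_prod_iff.1 (hlow x hx ξ y (hYX hy) a' ha')
        filter_upwards [nhdsWithin_mono y hYX hpb, self_mem_nhdsWithin] with w hw hwY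
        rw [← hWV w (hYX hwY)]
        exact haa'.trans_le (ge_of_tendsto (hpt x hx ξ w (hYX hwY))
          (hpa.mono fun ν hν => (hab' hν hw).le))
      obtain ⟨y, hy, hmin⟩ := hlsc.exists_isMinOn hne hK
      exact ⟨y, hy, fun z hz => hmin hz⟩

end
end

section
/- Convergence of infima under epi-convergence with uniformly bounded domains: Let f, f_ν : ℝⁿ → ℝ̄ (ν ∈ ℕ) with f proper (f(x) > −∞ for all x and f not identically ∞), and suppose f_ν epi-converges to f. Then the outer limit of the sets argmin f_ν is contained in argmin f. If, in addition, the union over ν ∈ ℕ of the sets {x ∈ ℝⁿ : f_ν(x) < ∞} is bounded, then inf f_ν → inf f. -/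
/-!
The liminf half of epi-convergence also holds along subsequences (`EpiConvergesOn.le_liminf_comp`):
a sequence converging to `x` along a subsequence of indices is filled up by the constant value `x`
at the missing indices.

A limit `x` of minimizers along a subsequence then satisfies
`f x ≤ liminf f_ν(x_ν) ≤ limsup f_ν(y_ν) ≤ f y` for every `y`, where `y_ν` is a recovery sequence
for `y`. The recovery sequences also give `limsup inf f_ν ≤ inf f`. For the reverse inequality,
if `liminf inf f_ν < c < inf f`, infinitely many `f_ν` take a value `< c` at some point of their
domain; the uniform bound on the domains yields a cluster point `x` of such points, and
`f x ≤ c < inf f` is absurd.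
-/

open Filter Topology Set

/-- The set of (global) minimizers of an extended-real-valued function. -/
def Argmin {E : Type*} (g : E → EReal) : Set E := {x | ∀ y, g x ≤ g y}

/-- The liminf inequality of epi-convergence, along a subsequence. -/
theorem EpiConvergesOn.le_liminf_comp {E : Type*} [TopologicalSpace E]
    {F : ℕ → E → EReal} {f : E → EReal} (h : EpiConvergesOn Set.univ F f)
    {φ : ℕ → ℕ} (hφ : StrictMono φ) {s : ℕ → E} {x : E} (hs : Tendsto s atTop (𝓝 x)) :
    f x ≤ liminf (fun κ => F (φ κ) (s κ)) atTop := by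
  have hz : Tendsto (Function.extend φ s (fun _ => x)) atTop (𝓝 x) := by
    intro U hU
    obtain ⟨K, hK⟩ := eventually_atTop.1 (hs hU)
    refine eventually_atTop.2 ⟨φ K, fun ν hν => ?_⟩
    by_cases hr : ∃ κ, φ κ = ν
    · obtain ⟨κ, rfl⟩ := hr
      simpa [hφ.injective.extend_apply] using hK κ (hφ.le_iff_le.1 hν)
    · simpa [Function.extend_apply' _ _ _ hr] using mem_of_mem_nhds hU
  refine ((h x (mem_univ x)).1 _ (fun _ => mem_univ _) hz).trans ?_
  refine (liminf_le_liminf_of_le hφ.tendsto_atTop).trans (le_of_eq ?_)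
  rw [← liminf_comp]
  simp only [Function.comp_def, hφ.injective.extend_apply]

/-- Convergence of minimizers and infima under epi-convergence with
uniformly bounded domains. -/
theorem argmin_and_inf_convergence_of_epi {n : ℕ}
    (f : EuclideanSpace ℝ (Fin n) → EReal)
    (fν : ℕ → EuclideanSpace ℝ (Fin n) → EReal)
    (hproper : (∀ x, f x ≠ ⊥) ∧ ∃ x, f x ≠ ⊤)
    (hepi : EpiConvergesOn Set.univ fν f) :
    OuterLimit (fun ν => Argmin (fν ν)) ⊆ Argmin f ∧
    (Bornology.IsBounded (⋃ ν, {x | fν ν x < ⊤}) →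
      Tendsto (fun ν => ⨅ x, fν ν x) atTop (𝓝 (⨅ x, f x))) := by
  refine ⟨?_, fun hb => ?_⟩
  · rintro x ⟨φ, hφ, s, hs, hsx⟩ y
    obtain ⟨ys, -, -, hys⟩ := (hepi y (mem_univ y)).2
    calc f x ≤ liminf (fun κ => fν (φ κ) (s κ)) atTop := hepi.le_liminf_comp hφ hsx
      _ ≤ limsup (fun κ => fν (φ κ) (s κ)) atTop := liminf_le_limsup
      _ ≤ limsup ((fun ν => fν ν (ys ν)) ∘ φ) atTop :=
          limsup_le_limsup (Eventually.of_forall fun κ => hs κ _)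
      _ ≤ limsup (fun ν => fν ν (ys ν)) atTop := by
          rw [limsup_comp]
          exact limsup_le_limsup_of_le hφ.tendsto_atTop
      _ ≤ f y := hys
  · refine tendsto_of_le_liminf_of_limsup_le ?_ (le_iInf fun y => ?_)
    · by_contra! hlt
      obtain ⟨c, hc, hcf⟩ := exists_between hlt
      obtain ⟨φ, hφ, hφc⟩ :=
        extraction_of_frequently_atTop (frequently_lt_of_liminf_lt (by isBoundedDefault) hc)
      choose s hs using fun κ => iInf_lt_iff.1 (hφc κ)
      have hmem : ∀ κ, s κ ∈ ⋃ ν, {x | fν ν x < ⊤} := fun κ =>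
        mem_iUnion.2 ⟨φ κ, (hs κ).trans_le le_top⟩
      obtain ⟨x, -, ψ, hψ, hx⟩ := tendsto_subseq_of_bounded hb hmem
      have hle : f x ≤ c :=
        (hepi.le_liminf_comp (hφ.comp hψ) hx).trans <|
          (liminf_le_limsup (by isBoundedDefault) (by isBoundedDefault)).trans <|
            limsup_le_of_le (by isBoundedDefault) (Eventually.of_forall fun κ => (hs (ψ κ)).le)
      exact absurd ((iInf_le f x).trans hle) hcf.not_ge
    · obtain ⟨ys, -, -, hys⟩ := (hepi y (mem_univ y)).2
      exact (limsup_le_limsup (Eventually.of_forall fun ν => iInf_le _ _)).trans hys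
end
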